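/- Let 𝒢 be a group structure on {1,…,p} with positive weights (η_g) such that every index j ∈ {1,…,p} belongs to at least one group, let Ω(w) = Σ_{g∈𝒢} η_g ‖w_g‖_∞, and let λ > 0. Then the set { Σ_{g∈𝒢} ξ^g : ξ = (ξ^g)_{g∈𝒢} with ξ^g_j = 0 for j ∉ g and ‖ξ^g‖₁ ≤ λη_g for all g } is exactly the ball { κ ∈ ℝ^p : Ω*(κ) ≤ λ } of the dual norm Ω*(κ) = max_{Ω(z)≤1} z⊤κ. -/

import Mathlib

open Finset

/-- The ℓ∞-norm of the subvector of `w` indexed by the group `g`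
(equal to `max_{j ∈ g} |w j|` for nonempty `g`, and `0` for empty `g`). -/
noncomputable def gsup {p : ℕ} (g : Finset (Fin p)) (w : Fin p → ℝ) : ℝ :=
  ↑(g.sup fun j => Real.nnabs (w j))

/-- The structured norm `Ω(w) = ∑_{g ∈ 𝒢} η_g ‖w_g‖_∞`. -/
noncomputable def Omega {p : ℕ} (G : Finset (Finset (Fin p)))
    (η : Finset (Fin p) → ℝ) (w : Fin p → ℝ) : ℝ :=
  ∑ g ∈ G, η g * gsup g w

/-- ℓ₁-norm of a vector. -/
def l1 {p : ℕ} (v : Fin p → ℝ) : ℝ := ∑ j, |v j|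

/-- A family `ξ = (ξ^g)_{g ∈ 𝒢}` is dual-feasible at level `lam` if `ξ^g_j = 0` for
`j ∉ g` and `‖ξ^g‖₁ ≤ lam * η_g` for every `g ∈ 𝒢`. -/
def DualFeasible {p : ℕ} (G : Finset (Finset (Fin p))) (η : Finset (Fin p) → ℝ)
    (lam : ℝ) (ξ : Finset (Fin p) → Fin p → ℝ) : Prop :=
  ∀ g ∈ G, (∀ j, j ∉ g → ξ g j = 0) ∧ l1 (ξ g) ≤ lam * η g

/-- Primal (proximal) objective `½‖u − w‖₂² + λ Ω(w)`. -/
noncomputable def proxObj {p : ℕ} (G : Finset (Finset (Fin p)))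
    (η : Finset (Fin p) → ℝ) (lam : ℝ) (u w : Fin p → ℝ) : ℝ :=
  (1/2) * ∑ j, (u j - w j)^2 + lam * Omega G η w

/-- Dual objective `½‖u − ∑_{g} ξ^g‖₂²`. -/
noncomputable def dualObj {p : ℕ} (G : Finset (Finset (Fin p))) (u : Fin p → ℝ)
    (ξ : Finset (Fin p) → Fin p → ℝ) : ℝ :=
  (1/2) * ∑ j, (u j - ∑ g ∈ G, ξ g j)^2

/-- The dual norm `Ω*(κ) = max_{Ω(z) ≤ 1} z⊤κ`. -/
noncomputable def dualNorm {p : ℕ} (G : Finset (Finset (Fin p)))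
    (η : Finset (Fin p) → ℝ) (κ : Fin p → ℝ) : ℝ :=
  sSup {t : ℝ | ∃ z : Fin p → ℝ, Omega G η z ≤ 1 ∧ t = ∑ j, z j * κ j}

/-!
A vector `κ` lies in the dual ball of radius `λ` iff the linear functional `z ↦ κ ⬝ᵥ z` is
dominated by `λ Ω = ∑ g, λ η_g ‖·_g‖_∞`. A linear functional dominated by a finite sum of sublinear
functionals splits into linear functionals dominated by the summands: on the product space,
extend it by Hahn–Banach from the diagonal and restrict the extension to the factors. Finally,
`v ⬝ᵥ z ≤ c ‖z_g‖_∞` holds for all `z` exactly when `v` vanishes off `g` and `‖v‖₁ ≤ c`.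
-/

section Sublinear

variable {ι E F : Type*} [AddCommGroup E] [Module ℝ E] [AddCommGroup F] [Module ℝ F]

lemma map_zero_of_pos_homogeneous {N : E → ℝ}
    (N_hom : ∀ c : ℝ, 0 < c → ∀ x, N (c • x) = c * N x) : N 0 = 0 := by
  have h := N_hom 2 two_pos 0
  rw [smul_zero] at h
  linarith

lemma exists_comp_eq_of_le_sublinear_comp (A : E →ₗ[ℝ] F) (f : E →ₗ[ℝ] ℝ) (N : F → ℝ)
    (N_hom : ∀ c : ℝ, 0 < c → ∀ y, N (c • y) = c * N y)
    (N_add : ∀ y z, N (y + z) ≤ N y + N z) (hf : ∀ x, f x ≤ N (A x)) :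
    ∃ g : F →ₗ[ℝ] ℝ, g ∘ₗ A = f ∧ ∀ y, g y ≤ N y := by
  have nonpos_on_ker : ∀ x, A x = 0 → f x ≤ 0 := fun x hx => by
    simpa only [hx, map_zero_of_pos_homogeneous N_hom] using hf x
  have mem_annihilator : f ∈ (LinearMap.ker A).dualAnnihilator := by
    rw [Submodule.mem_dualAnnihilator]
    intro x hx
    rw [LinearMap.mem_ker] at hx
    have hneg : -f x ≤ 0 := by simpa only [map_neg] using nonpos_on_ker (-x) (by simp [hx])
    linarith [nonpos_on_ker x hx]
  rw [← LinearMap.range_dualMap_eq_dualAnnihilator_ker] at mem_annihilator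
  obtain ⟨φ, rfl⟩ := mem_annihilator
  obtain ⟨g, hgφ, hgN⟩ := exists_extension_of_le_sublinear
    ⟨LinearMap.range A, φ.domRestrict (LinearMap.range A)⟩ N N_hom N_add
    (by rintro ⟨_, x, rfl⟩; exact hf x)
  exact ⟨g, LinearMap.ext fun x => hgφ ⟨A x, x, rfl⟩, hgN⟩

lemma exists_sum_eq_of_le_sum_sublinear_univ [Fintype ι] (f : E →ₗ[ℝ] ℝ) (N : ι → E → ℝ)
    (N_hom : ∀ i, ∀ c : ℝ, 0 < c → ∀ x, N i (c • x) = c * N i x)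
    (N_add : ∀ i x y, N i (x + y) ≤ N i x + N i y) (hf : ∀ x, f x ≤ ∑ i, N i x) :
    ∃ g : ι → E →ₗ[ℝ] ℝ, ∑ i, g i = f ∧ ∀ i x, g i x ≤ N i x := by
  classical
  obtain ⟨Φ, hΦf, hΦN⟩ := exists_comp_eq_of_le_sublinear_comp
    (LinearMap.pi fun _ : ι => LinearMap.id) f (fun y => ∑ i, N i (y i))
    (fun c hc y => by simp only [Pi.smul_apply, N_hom _ c hc, mul_sum])
    (fun y z => by
      rw [← sum_add_distrib]
      exact sum_le_sum fun i _ => N_add i (y i) (z i))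
    hf
  refine ⟨fun i => Φ ∘ₗ LinearMap.single ℝ (fun _ => E) i, ?_, fun i x => ?_⟩
  · ext x
    simp only [LinearMap.sum_apply, LinearMap.comp_apply, LinearMap.coe_single, ← map_sum,
      univ_sum_single (fun _ => x), ← hΦf]
    rfl
  · let y : ι → E := Pi.single i x
    calc Φ y ≤ ∑ k, N k (y k) := hΦN y
      _ = N i (y i) := Fintype.sum_eq_single i fun k hk => by
        have y_off : y k = 0 := by simp [y, hk]
        rw [y_off, map_zero_of_pos_homogeneous (N_hom k)]
      _ = N i x := by simp [y]

lemma exists_sum_eq_of_le_sum_sublinear (s : Finset ι) (f : E →ₗ[ℝ] ℝ) (N : ι → E → ℝ)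
    (N_hom : ∀ i ∈ s, ∀ c : ℝ, 0 < c → ∀ x, N i (c • x) = c * N i x)
    (N_add : ∀ i ∈ s, ∀ x y, N i (x + y) ≤ N i x + N i y) (hf : ∀ x, f x ≤ ∑ i ∈ s, N i x) :
    ∃ g : ι → E →ₗ[ℝ] ℝ, ∑ i ∈ s, g i = f ∧ ∀ i ∈ s, ∀ x, g i x ≤ N i x := by
  obtain ⟨g, hgf, hgN⟩ := exists_sum_eq_of_le_sum_sublinear_univ f (fun i : s => N i)
    (fun i => N_hom i i.2) (fun i => N_add i i.2)
    (fun x => (hf x).trans_eq (sum_coe_sort s fun i => N i x).symm)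
  obtain ⟨g, rfl⟩ := Subtype.exists_pi_extension (α := fun _ => E →ₗ[ℝ] ℝ) g
  exact ⟨g, by rw [← hgf, sum_coe_sort s g], fun i hi => hgN ⟨i, hi⟩⟩

lemma sSup_image_le_iff_forall_le_mul (f : E →ₗ[ℝ] ℝ) {N : E → ℝ}
    (N_hom : ∀ c : ℝ, 0 < c → ∀ x, N (c • x) = c * N x) (N_nonneg : ∀ x, 0 ≤ N x)
    (hbdd : BddAbove (f '' {x | N x ≤ 1})) {c : ℝ} (hc : 0 ≤ c) :
    sSup (f '' {x | N x ≤ 1}) ≤ c ↔ ∀ x, f x ≤ c * N x := by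
  constructor
  · intro hsup x
    -- Scaling by some `r > N x` rather than by `N x` itself covers the case `N x = 0`.
    refine le_mul_of_forall_lt₀ fun b hb r hr => ?_
    have hr0 : 0 < r := (N_nonneg x).trans_lt hr
    have scaled_mem : N (r⁻¹ • x) ≤ 1 := by
      rw [N_hom _ (inv_pos.mpr hr0), inv_mul_le_one₀ hr0]
      exact hr.le
    have scaled_le : r⁻¹ * f x ≤ c := by
      simpa only [map_smul, smul_eq_mul] using
        (le_csSup hbdd (Set.mem_image_of_mem f scaled_mem)).trans hsup
    calc f x ≤ r * c := (inv_mul_le_iff₀ hr0).mp scaled_le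
      _ = c * r := mul_comm r c
      _ ≤ b * r := by gcongr
  · intro h
    refine Real.sSup_le ?_ hc
    rintro _ ⟨x, hx, rfl⟩
    exact (h x).trans (mul_le_of_le_one_right hc hx)

end Sublinear

section GroupNorm

variable {p : ℕ} {g : Finset (Fin p)}

lemma gsup_eq_norm_restrict (g : Finset (Fin p)) (w : Fin p → ℝ) :
    gsup g w = ‖g.restrict w‖ := by
  rw [gsup, Pi.norm_def, ← sup_attach]
  congr!

lemma gsup_nonneg (g : Finset (Fin p)) (w : Fin p → ℝ) : 0 ≤ gsup g w :=
  NNReal.coe_nonneg _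

lemma abs_le_gsup {j : Fin p} (hj : j ∈ g) (w : Fin p → ℝ) : |w j| ≤ gsup g w := by
  rw [gsup_eq_norm_restrict]
  exact norm_le_pi_norm (g.restrict w) ⟨j, hj⟩

lemma gsup_le {w : Fin p → ℝ} {r : ℝ} (hr : 0 ≤ r) (h : ∀ j ∈ g, |w j| ≤ r) : gsup g w ≤ r := by
  rw [gsup_eq_norm_restrict, pi_norm_le_iff_of_nonneg hr]
  exact fun j => h j j.2

lemma gsup_add_le (g : Finset (Fin p)) (w z : Fin p → ℝ) :
    gsup g (w + z) ≤ gsup g w + gsup g z := by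
  simp only [gsup_eq_norm_restrict]
  exact norm_add_le (g.restrict w) (g.restrict z)

lemma gsup_smul (g : Finset (Fin p)) (c : ℝ) (w : Fin p → ℝ) :
    gsup g (c • w) = |c| * gsup g w := by
  simp only [gsup_eq_norm_restrict]
  exact norm_smul c (g.restrict w)

lemma dotProduct_le_l1_mul_gsup {v : Fin p → ℝ} (hv : ∀ j ∉ g, v j = 0) (z : Fin p → ℝ) :
    v ⬝ᵥ z ≤ l1 v * gsup g z := by
  rw [dotProduct, l1, sum_mul]
  refine sum_le_sum fun j _ => ?_
  by_cases hj : j ∈ g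
  · calc v j * z j ≤ |v j| * |z j| := (le_abs_self _).trans_eq (abs_mul _ _)
      _ ≤ |v j| * gsup g z := by gcongr; exact abs_le_gsup hj z
  · simp [hv j hj]

lemma eq_zero_of_forall_dotProduct_le_mul_gsup {v : Fin p → ℝ} {c : ℝ}
    (h : ∀ z, v ⬝ᵥ z ≤ c * gsup g z) {j : Fin p} (hj : j ∉ g) : v j = 0 := by
  have gsup_zero : gsup g (Pi.single j (v j)) = 0 := by
    refine (gsup_le le_rfl fun i hi => ?_).antisymm (gsup_nonneg _ _)
    rw [Pi.single_eq_of_ne (ne_of_mem_of_not_mem hi hj), abs_zero]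
  have sq_nonpos : v j * v j ≤ 0 := by
    simpa only [dotProduct_single, gsup_zero, mul_zero] using h (Pi.single j (v j))
  exact mul_self_eq_zero.mp (sq_nonpos.antisymm (mul_self_nonneg _))

lemma l1_le_of_forall_dotProduct_le_mul_gsup {v : Fin p → ℝ} {c : ℝ} (hc : 0 ≤ c)
    (h : ∀ z, v ⬝ᵥ z ≤ c * gsup g z) : l1 v ≤ c := by
  let σ : Fin p → ℝ := fun j => SignType.sign (v j)
  have gsup_sign_le : gsup g σ ≤ 1 := gsup_le zero_le_one fun j _ => by
    rcases lt_trichotomy (v j) 0 with hj | hj | hj <;> simp [σ, hj]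
  calc l1 v = v ⬝ᵥ σ := sum_congr rfl fun j _ => (self_mul_sign (v j)).symm
    _ ≤ c * gsup g σ := h σ
    _ ≤ c := mul_le_of_le_one_right hc gsup_sign_le

lemma forall_dotProduct_le_mul_gsup_iff {v : Fin p → ℝ} {c : ℝ} (hc : 0 ≤ c) :
    (∀ z, v ⬝ᵥ z ≤ c * gsup g z) ↔ (∀ j, j ∉ g → v j = 0) ∧ l1 v ≤ c := by
  refine ⟨fun h => ⟨fun j => eq_zero_of_forall_dotProduct_le_mul_gsup h,
    l1_le_of_forall_dotProduct_le_mul_gsup hc h⟩, fun ⟨hv, hvc⟩ z => ?_⟩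
  exact (dotProduct_le_l1_mul_gsup hv z).trans
    (mul_le_mul_of_nonneg_right hvc (gsup_nonneg g z))

end GroupNorm

section StructuredNorm

variable {p : ℕ} {G : Finset (Finset (Fin p))} {η : Finset (Fin p) → ℝ}

lemma Omega_nonneg (hη : ∀ g ∈ G, 0 ≤ η g) (w : Fin p → ℝ) : 0 ≤ Omega G η w :=
  sum_nonneg fun g hg => mul_nonneg (hη g hg) (gsup_nonneg g w)

lemma Omega_smul (G : Finset (Finset (Fin p))) (η : Finset (Fin p) → ℝ) (c : ℝ)
    (w : Fin p → ℝ) : Omega G η (c • w) = |c| * Omega G η w := by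
  simp only [Omega, gsup_smul, mul_sum, mul_left_comm]

lemma mul_abs_le_Omega (hη : ∀ g ∈ G, 0 ≤ η g) {g : Finset (Fin p)} (hg : g ∈ G) {j : Fin p}
    (hj : j ∈ g) (w : Fin p → ℝ) : η g * |w j| ≤ Omega G η w :=
  calc η g * |w j| ≤ η g * gsup g w := mul_le_mul_of_nonneg_left (abs_le_gsup hj w) (hη g hg)
    _ ≤ Omega G η w := single_le_sum (f := fun g => η g * gsup g w)
      (fun g hg => mul_nonneg (hη g hg) (gsup_nonneg g w)) hg

lemma bddAbove_dotProduct_image_Omega_le_one (hη : ∀ g ∈ G, 0 < η g)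
    (hcover : ∀ j : Fin p, ∃ g ∈ G, j ∈ g) (κ : Fin p → ℝ) :
    BddAbove (dotProductEquiv ℝ (Fin p) κ '' {z | Omega G η z ≤ 1}) := by
  choose γ hγG hγ using hcover
  refine ⟨∑ j, |κ j| * (η (γ j))⁻¹, ?_⟩
  rintro _ ⟨z, hz, rfl⟩
  rw [dotProductEquiv_apply_apply, dotProduct]
  refine sum_le_sum fun j _ => ?_
  have abs_le_inv : |z j| ≤ (η (γ j))⁻¹ := by
    rw [← one_div, le_div_iff₀' (hη _ (hγG j))]
    exact (mul_abs_le_Omega (fun g hg => (hη g hg).le) (hγG j) (hγ j) z).trans hz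
  calc κ j * z j ≤ |κ j| * |z j| := (le_abs_self _).trans_eq (abs_mul _ _)
    _ ≤ |κ j| * (η (γ j))⁻¹ := by gcongr

lemma dualNorm_eq_sSup_image (G : Finset (Finset (Fin p))) (η : Finset (Fin p) → ℝ)
    (κ : Fin p → ℝ) :
    dualNorm G η κ = sSup (dotProductEquiv ℝ (Fin p) κ '' {z | Omega G η z ≤ 1}) := by
  rw [dualNorm]
  congr 1
  ext t
  exact exists_congr fun z => and_congr_right fun _ => by
    rw [eq_comm, dotProductEquiv_apply_apply, dotProduct_comm, dotProduct]

lemma dualNorm_le_iff (hη : ∀ g ∈ G, 0 < η g) (hcover : ∀ j : Fin p, ∃ g ∈ G, j ∈ g)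
    {lam : ℝ} (hlam : 0 ≤ lam) {κ : Fin p → ℝ} :
    dualNorm G η κ ≤ lam ↔ ∀ z, κ ⬝ᵥ z ≤ lam * Omega G η z := by
  rw [dualNorm_eq_sSup_image]
  exact sSup_image_le_iff_forall_le_mul _
    (fun c hc z => by rw [Omega_smul, abs_of_pos hc])
    (Omega_nonneg fun g hg => (hη g hg).le)
    (bddAbove_dotProduct_image_Omega_le_one hη hcover κ) hlam

variable {lam : ℝ}

lemma dualFeasible_iff (hc : ∀ g ∈ G, 0 ≤ lam * η g) {ξ : Finset (Fin p) → Fin p → ℝ} :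
    DualFeasible G η lam ξ ↔ ∀ g ∈ G, ∀ z, ξ g ⬝ᵥ z ≤ lam * η g * gsup g z :=
  forall₂_congr fun g hg => (forall_dotProduct_le_mul_gsup_iff (hc g hg)).symm

lemma sum_mul_gsup_eq_mul_Omega (G : Finset (Finset (Fin p))) (η : Finset (Fin p) → ℝ)
    (lam : ℝ) (z : Fin p → ℝ) :
    ∑ g ∈ G, lam * η g * gsup g z = lam * Omega G η z := by
  simp only [Omega, mul_sum, mul_assoc]

lemma exists_dualFeasible_sum_eq_iff (hc : ∀ g ∈ G, 0 ≤ lam * η g) {κ : Fin p → ℝ} :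
    (∃ ξ, DualFeasible G η lam ξ ∧ κ = fun j => ∑ g ∈ G, ξ g j) ↔
      ∀ z, κ ⬝ᵥ z ≤ lam * Omega G η z := by
  simp only [dualFeasible_iff hc, ← sum_mul_gsup_eq_mul_Omega, ← sum_fn]
  constructor
  · rintro ⟨ξ, hξ, rfl⟩ z
    rw [sum_dotProduct]
    exact sum_le_sum fun g hg => hξ g hg z
  · intro hκ
    obtain ⟨φ, hφκ, hφ⟩ := exists_sum_eq_of_le_sum_sublinear G (dotProductEquiv ℝ (Fin p) κ)
      (fun g z => lam * η g * gsup g z)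
      (fun g _ c hc z => by rw [gsup_smul, abs_of_pos hc, mul_left_comm])
      (fun g hg z w => by
        rw [← mul_add]
        exact mul_le_mul_of_nonneg_left (gsup_add_le g z w) (hc g hg))
      hκ
    refine ⟨fun g => (dotProductEquiv ℝ (Fin p)).symm (φ g), fun g hg z => ?_, ?_⟩
    · rw [← dotProductEquiv_apply_apply, LinearEquiv.apply_symm_apply]
      exact hφ g hg z
    · rw [← map_sum, hφκ, LinearEquiv.symm_apply_apply]

end StructuredNorm

/-- the set of sums `∑_g ξ^g` over dual-feasible families at level `λ`
is exactly the dual-norm ball of radius `λ`. -/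
theorem stmt3 {p : ℕ} (G : Finset (Finset (Fin p))) (η : Finset (Fin p) → ℝ)
    (hne : ∀ g ∈ G, g.Nonempty) (hη : ∀ g ∈ G, 0 < η g)
    (hcover : ∀ j : Fin p, ∃ g ∈ G, j ∈ g)
    (lam : ℝ) (hlam : 0 < lam) :
    {κ : Fin p → ℝ | ∃ ξ : Finset (Fin p) → Fin p → ℝ,
        DualFeasible G η lam ξ ∧ κ = fun j => ∑ g ∈ G, ξ g j}
      = {κ : Fin p → ℝ | dualNorm G η κ ≤ lam} := by
  ext κ
  have hc : ∀ g ∈ G, 0 ≤ lam * η g := fun g hg => (mul_pos hlam (hη g hg)).le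
  rw [Set.mem_ofPred_eq, Set.mem_ofPred_eq, exists_dualFeasible_sum_eq_iff hc,
    dualNorm_le_iff hη hcover hlam.le]
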